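/- Let U ⊆ ℝ^m be a connected and simply connected open set. Let P_1,…,P_m : U → ℝ^{m×m} be smooth with each P_k(q) skew-symmetric, and let g_1,…,g_m, h_1,…,h_m : U → ℝ^m be smooth (column-vector valued). Assume for all k, l ∈ {1,…,m} on U: (i) ∂_k g_l − ∂_l g_k = P_l g_k − P_k g_l; (ii) ∂_k h_l − ∂_l h_k = P_l h_k − P_k h_l; (iii) ⟨g_k, h_l⟩ = ⟨g_l, h_k⟩; (iv) ∂_k P_l − ∂_l P_k = P_l P_k − P_k P_l + h_k h_lᵀ − h_l h_kᵀ. Define Ã_k : U → ℝ^{(m+1)×(m+1)} as the block matrix with upper-left m×m block P_k, with −h_k as the first m entries of the last column, with h_kᵀ as the first m entries of the last row, and (m+1, m+1)-entry 0, and set ĝ_k := (g_k, 0) ∈ ℝ^{m+1}. Then there exist smooth maps F : U → SO(m+1) and f : U → ℝ^{m+1} satisfying ∂_k F = F Ã_k and ∂_k f = F ĝ_k on U for all k. Moreover, setting ν := (last column of F), the pair (f, ν) is a frontal in ℝ^{m+1} (‖ν‖ = 1 and ⟨∂_k f, ν⟩ = 0) whose fundamental data realize the prescribed one: ⟨∂_k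 f, ∂_l f⟩ = ⟨g_k, g_l⟩, ⟨∂_k f, ∂_l ν⟩ = −⟨g_k, h_l⟩, and ⟨∂_k ν, ∂_l ν⟩ = ⟨h_k, h_l⟩ on U. -/

import Mathlib

open scoped Matrix

noncomputable section

/-- Partial derivative of a vector-valued map in the `k`-th coordinate direction. -/
def pd {m N : ℕ} (k : Fin m) (f : (Fin m → ℝ) → (Fin N → ℝ)) :
    (Fin m → ℝ) → (Fin N → ℝ) :=
  fun q => fderiv ℝ f q (Pi.single k 1)

/-- Partial derivative of a scalar function in the `k`-th coordinate direction. -/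
def pdr {m : ℕ} (k : Fin m) (g : (Fin m → ℝ) → ℝ) : (Fin m → ℝ) → ℝ :=
  fun q => fderiv ℝ g q (Pi.single k 1)

/-- Entrywise partial derivative of a matrix-valued map. -/
def pdM {m N : ℕ} (k : Fin m) (A : (Fin m → ℝ) → Matrix (Fin N) (Fin N) ℝ) :
    (Fin m → ℝ) → Matrix (Fin N) (Fin N) ℝ :=
  fun q => Matrix.of fun i j => pdr k (fun x => A x i j) q

/-- The block matrix `Ã` with upper-left `m×m` block `P`, last column `(-h, 0)ᵀ`
and last row `(hᵀ, 0)`. -/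
def tildeA {m : ℕ} (P : Matrix (Fin m) (Fin m) ℝ) (h : Fin m → ℝ) :
    Matrix (Fin (m + 1)) (Fin (m + 1)) ℝ :=
  Matrix.of fun i j =>
    if hi : (i : ℕ) < m then
      (if hj : (j : ℕ) < m then P ⟨i, hi⟩ ⟨j, hj⟩ else -h ⟨i, hi⟩)
    else
      (if hj : (j : ℕ) < m then h ⟨j, hj⟩ else 0)

/-- `ĝ = (g, 0) ∈ ℝ^{m+1}`. -/
def hatg {m : ℕ} (g : Fin m → ℝ) : Fin (m + 1) → ℝ :=
  fun i => if hi : (i : ℕ) < m then g ⟨i, hi⟩ else 0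

/-!
Together, the rows `v` of the frame `F` and the entries `a` of `f` satisfy a linear total
differential equation `d(v, a) = Ω (v, a)`, where `Ω` is the connection form of rigid motions with
blocks `Ã` and `ĝ`. The Codazzi, compatibility and Gauss equations say exactly that `Ω` is flat.
On a small ball the equation is solved by Picard iteration along rays from the centre: for flat `Ω`
the defect `dy - Ω y` of an iterate is controlled by that of the previous one, so the limit solves
the equation in every direction and not only the radial one. The graphs of the local solutions
foliate `U × V`; giving the fibres the discrete topology, they form a covering space of `U`, which
has a global section through every point as `U` is simply connected. Finally `Ã` is skew-symmetric,
so `F Fᵀ` and `det F` stay constant, and the inner products of the derivatives of `f` and of the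
last column of `F` are read off in the frame.
-/

section ParametricIntegral

open Set Filter Topology MeasureTheory Interval

variable {X V : Type*} [TopologicalSpace X] [NormedAddCommGroup V]

theorem exists_eventually_forall_norm_le_of_continuousOn_prod {T : Type*} [TopologicalSpace T]
    {F : X → T → V} {s : Set X} {K : Set T} (hK : IsCompact K)
    (hF : ContinuousOn (Function.uncurry F) (s ×ˢ K)) {x : X} (hx : x ∈ s) :
    ∃ M, ∀ᶠ y in 𝓝[s] x, ∀ t ∈ K, ‖F y t‖ ≤ M := by
  suffices ∃ M, ∀ᶠ y in 𝓝[s] x, ∀ t ∈ K, t ∈ K → ‖F y t‖ ≤ M from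
    this.imp fun M hM => hM.mono fun y hy t ht => hy t ht ht
  refine hK.induction_on (p := fun K' => ∃ M, ∀ᶠ y in 𝓝[s] x, ∀ t ∈ K', t ∈ K → ‖F y t‖ ≤ M)
    ⟨0, by simp⟩ (fun K₁ K₂ h ⟨M, hM⟩ => ⟨M, hM.mono fun y hy t ht => hy t (h ht)⟩) ?_ ?_
  · rintro K₁ K₂ ⟨M₁, h₁⟩ ⟨M₂, h₂⟩
    refine ⟨max M₁ M₂, ?_⟩
    filter_upwards [h₁, h₂] with y hy₁ hy₂ t ht htK
    exact ht.elim (fun h => le_max_of_le_left (hy₁ t h htK))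
      fun h => le_max_of_le_right (hy₂ t h htK)
  · intro t ht
    have hbound : ∀ᶠ p in 𝓝[s] x ×ˢ 𝓝[K] t, ‖Function.uncurry F p‖ < ‖F x t‖ + 1 := by
      rw [← nhdsWithin_prod_eq]
      exact (hF (x, t) ⟨hx, ht⟩).norm.eventually_lt_const (lt_add_one _)
    obtain ⟨p, hp, q, hq, hpq⟩ := eventually_prod_iff.1 hbound
    exact ⟨{t | q t}, hq, ‖F x t‖ + 1, hp.mono fun y hy t ht _ => (hpq hy ht).le⟩

variable [NormedSpace ℝ V] {a b : ℝ}

theorem continuousOn_intervalIntegral_of_continuousOn_prod [FirstCountableTopology X]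
    {F : X → ℝ → V} {s : Set X} (hF : ContinuousOn (Function.uncurry F) (s ×ˢ [[a, b]])) :
    ContinuousOn (fun x => ∫ t in a..b, F x t) s := by
  intro x hx
  obtain ⟨M, hM⟩ := exists_eventually_forall_norm_le_of_continuousOn_prod isCompact_uIcc hF hx
  refine intervalIntegral.continuousWithinAt_of_dominated_interval (bound := fun _ => M)
    ?_ ?_ intervalIntegrable_const ?_
  · filter_upwards [self_mem_nhdsWithin] with y hy
    exact ((hF.uncurry_left y hy).mono uIoc_subset_uIcc).aestronglyMeasurable measurableSet_uIoc
  · filter_upwards [hM] with y hy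
    exact .of_forall fun t ht => hy t (uIoc_subset_uIcc ht)
  · exact .of_forall fun t ht => hF.uncurry_right t (uIoc_subset_uIcc ht) x hx

theorem hasFDerivAt_intervalIntegral_of_continuousOn_prod {E : Type*} [NormedAddCommGroup E]
    [NormedSpace ℝ E] {F : E → ℝ → V} {F' : E → ℝ → E →L[ℝ] V} {s : Set E} (hs : IsOpen s)
    (hF : ContinuousOn (Function.uncurry F) (s ×ˢ [[a, b]]))
    (hF' : ContinuousOn (Function.uncurry F') (s ×ˢ [[a, b]]))
    (hderiv : ∀ x ∈ s, ∀ t ∈ [[a, b]], HasFDerivAt (F · t) (F' x t) x) {x : E} (hx : x ∈ s) :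
    HasFDerivAt (fun x => ∫ t in a..b, F x t) (∫ t in a..b, F' x t) x := by
  obtain ⟨M, hM⟩ := exists_eventually_forall_norm_le_of_continuousOn_prod isCompact_uIcc hF' hx
  rw [hs.nhdsWithin_eq hx] at hM
  refine intervalIntegral.hasFDerivAt_integral_of_dominated_of_fderiv_le (bound := fun _ => M)
    (hM.and (hs.mem_nhds hx)) ?_ (hF.uncurry_left x hx).intervalIntegrable
    (((hF'.uncurry_left x hx).mono uIoc_subset_uIcc).aestronglyMeasurable measurableSet_uIoc)
    (.of_forall fun t ht y hy => hy.1 t (uIoc_subset_uIcc ht)) intervalIntegrable_const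
    (.of_forall fun t ht y hy => hderiv y hy.2 t (uIoc_subset_uIcc ht))
  filter_upwards [hs.mem_nhds hx] with y hy
  exact ((hF.uncurry_left y hy).mono uIoc_subset_uIcc).aestronglyMeasurable measurableSet_uIoc

end ParametricIntegral

section CurveIntegral

open Set Filter Topology MeasureTheory Interval AffineMap

variable {E V : Type*} [NormedAddCommGroup E] [NormedSpace ℝ E]
  [NormedAddCommGroup V] [NormedSpace ℝ V] {ω : E → E →L[ℝ] V} {s : Set E} {c x : E}

theorem continuousOn_comp_lineMap_prod {Y : Type*} [TopologicalSpace Y] {f : E → Y}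
    (hs : Convex ℝ s) (hc : c ∈ s) (hf : ContinuousOn f s) :
    ContinuousOn (fun p : E × ℝ => f (lineMap c p.1 p.2)) (s ×ˢ [[(0 : ℝ), 1]]) := by
  refine hf.comp (f := fun p : E × ℝ => lineMap c p.1 p.2) ?_ fun p hp => ?_
  · simp only [lineMap_apply_module']; fun_prop
  · exact hs.lineMap_mem hc hp.1 (uIcc_of_le (zero_le_one' ℝ) ▸ hp.2)

/-- The derivative in `x` of the integrand `ω (c + t (x - c)) (x - c)` of the integral of `ω`
over the segment from `c` to `x`. -/
def segmentIntegrandFDeriv (ω : E → E →L[ℝ] V) (c x : E) (t : ℝ) : E →L[ℝ] V :=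
  ω (lineMap c x t) + t • (fderiv ℝ ω (lineMap c x t)).flip (x - c)

theorem continuousOn_segmentIntegrandFDeriv (hs : Convex ℝ s) (hso : IsOpen s) (hc : c ∈ s)
    (hω : ContDiffOn ℝ 1 ω s) :
    ContinuousOn (Function.uncurry (segmentIntegrandFDeriv ω c)) (s ×ˢ [[(0 : ℝ), 1]]) := by
  have hflip : ContinuousOn (fun z => (fderiv ℝ ω z).flip) s :=
    (ContinuousLinearMap.flipₗᵢ ℝ E E V).continuous.comp_continuousOn
      (hω.continuousOn_fderiv_of_isOpen hso le_rfl)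
  exact (continuousOn_comp_lineMap_prod hs hc hω.continuousOn).add <|
    continuousOn_snd.smul <| (continuousOn_comp_lineMap_prod hs hc hflip).clm_apply (by fun_prop)

theorem hasFDerivAt_segmentIntegrand {t : ℝ} (hω : DifferentiableAt ℝ ω (lineMap c x t)) :
    HasFDerivAt (fun x => ω (lineMap c x t) (x - c)) (segmentIntegrandFDeriv ω c x t) x := by
  have hline :
      HasFDerivAt (fun x : E => (lineMap c x t : E)) (t • ContinuousLinearMap.id ℝ E) x := by
    simp only [lineMap_apply_module']
    exact (((hasFDerivAt_id x).sub_const c).const_smul t).add_const c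
  refine ((hω.hasFDerivAt.comp x hline).clm_apply ((hasFDerivAt_id x).sub_const c)).congr_fderiv ?_
  ext w
  simp [segmentIntegrandFDeriv]

theorem hasFDerivAt_curveIntegral_segment (hs : Convex ℝ s) (hso : IsOpen s) (hc : c ∈ s)
    (hω : ContDiffOn ℝ 1 ω s) (hx : x ∈ s) :
    HasFDerivAt (fun x => ∫ᶜ z in .segment c x, ω z)
      (∫ t in (0 : ℝ)..1, segmentIntegrandFDeriv ω c x t) x := by
  simp only [curveIntegral_segment]
  refine hasFDerivAt_intervalIntegral_of_continuousOn_prod hso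
    ((continuousOn_comp_lineMap_prod hs hc hω.continuousOn).clm_apply (by fun_prop))
    (continuousOn_segmentIntegrandFDeriv hs hso hc hω) (fun y hy t ht => ?_) hx
  rw [uIcc_of_le zero_le_one] at ht
  exact hasFDerivAt_segmentIntegrand <|
    (hω.differentiableOn one_ne_zero).differentiableAt (hso.mem_nhds (hs.lineMap_mem hc hy ht))

theorem contDiffOn_curveIntegral_segment (hs : Convex ℝ s) (hso : IsOpen s) (hc : c ∈ s)
    (hω : ContDiffOn ℝ 1 ω s) : ContDiffOn ℝ 1 (fun x => ∫ᶜ z in .segment c x, ω z) s := by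
  have hderiv := fun x (hx : x ∈ s) => hasFDerivAt_curveIntegral_segment hs hso hc hω hx
  refine (contDiffOn_succ_iff_fderiv_of_isOpen (n := 0) hso).2
    ⟨fun x hx => (hderiv x hx).differentiableAt.differentiableWithinAt, by simp,
    contDiffOn_zero.2 <| (continuousOn_intervalIntegral_of_continuousOn_prod
      (continuousOn_segmentIntegrandFDeriv hs hso hc hω)).congr fun x hx => (hderiv x hx).fderiv⟩

variable [CompleteSpace V]

theorem integral_lineMap_add_smul_fderiv (hs : Convex ℝ s) (hso : IsOpen s) (hc : c ∈ s)
    (hω : ContDiffOn ℝ 1 ω s) (hx : x ∈ s) (w : E) :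
    ∫ t in (0 : ℝ)..1, (ω (lineMap c x t) w + t • fderiv ℝ ω (lineMap c x t) (x - c) w)
      = ω x w := by
  have hmem : ∀ t ∈ [[(0 : ℝ), 1]], lineMap c x t ∈ s := fun t ht =>
    hs.lineMap_mem hc hx (uIcc_of_le (zero_le_one' ℝ) ▸ ht)
  have hline : ContinuousOn (lineMap c x : ℝ → E) [[(0 : ℝ), 1]] :=
    AffineMap.lineMap_continuous.continuousOn
  have hderiv : ∀ t ∈ [[(0 : ℝ), 1]], HasDerivAt (fun t : ℝ => t • ω (lineMap c x t) w)
      (ω (lineMap c x t) w + t • fderiv ℝ ω (lineMap c x t) (x - c) w) t := by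
    intro t ht
    have hωt : HasFDerivAt ω (fderiv ℝ ω (lineMap c x t)) (lineMap c x t) :=
      ((hω.differentiableOn one_ne_zero).differentiableAt
        (hso.mem_nhds (hmem t ht))).hasFDerivAt
    have h := (hasDerivAt_id t).smul
      ((hωt.comp_hasDerivAt t AffineMap.hasDerivAt_lineMap).clm_apply (hasDerivAt_const t w))
    refine h.congr_deriv ?_
    simp [add_comm]
  have hint : ContinuousOn (fun t : ℝ =>
      ω (lineMap c x t) w + t • fderiv ℝ ω (lineMap c x t) (x - c) w) [[(0 : ℝ), 1]] :=
    ((hω.continuousOn.comp hline hmem).clm_apply continuousOn_const).add <|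
      continuousOn_id.smul <| (((hω.continuousOn_fderiv_of_isOpen hso le_rfl).comp hline
        hmem).clm_apply continuousOn_const).clm_apply continuousOn_const
  rw [intervalIntegral.integral_eq_sub_of_hasDerivAt hderiv hint.intervalIntegrable]
  simp

theorem fderiv_curveIntegral_segment_apply (hs : Convex ℝ s) (hso : IsOpen s) (hc : c ∈ s)
    (hω : ContDiffOn ℝ 1 ω s) (hx : x ∈ s) (w : E) :
    fderiv ℝ (fun x => ∫ᶜ z in .segment c x, ω z) x w = ω x w +
      ∫ t in (0 : ℝ)..1, t • (fderiv ℝ ω (lineMap c x t) w (x - c) -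
        fderiv ℝ ω (lineMap c x t) (x - c) w) := by
  have hmem : ∀ t ∈ [[(0 : ℝ), 1]], lineMap c x t ∈ s := fun t ht =>
    hs.lineMap_mem hc hx (uIcc_of_le (zero_le_one' ℝ) ▸ ht)
  have hω' : ContinuousOn (fun t : ℝ => fderiv ℝ ω (lineMap c x t)) [[(0 : ℝ), 1]] :=
    (hω.continuousOn_fderiv_of_isOpen hso le_rfl).comp
      AffineMap.lineMap_continuous.continuousOn hmem
  have hωc : ContinuousOn (fun t : ℝ => ω (lineMap c x t)) [[(0 : ℝ), 1]] :=
    hω.continuousOn.comp AffineMap.lineMap_continuous.continuousOn hmem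
  have hF : ContinuousOn (segmentIntegrandFDeriv ω c x) [[(0 : ℝ), 1]] :=
    (continuousOn_segmentIntegrandFDeriv hs hso hc hω).uncurry_left x hx
  rw [(hasFDerivAt_curveIntegral_segment hs hso hc hω hx).fderiv,
    ContinuousLinearMap.intervalIntegral_apply hF.intervalIntegrable,
    ← integral_lineMap_add_smul_fderiv hs hso hc hω hx w, ← intervalIntegral.integral_add]
  · simp only [segmentIntegrandFDeriv, add_apply, smul_apply,
      ContinuousLinearMap.flip_apply, smul_sub,
      add_add_sub_cancel]
  · exact ((hωc.clm_apply continuousOn_const).add <| continuousOn_id.smul <|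
      (hω'.clm_apply continuousOn_const).clm_apply continuousOn_const).intervalIntegrable
  · exact (continuousOn_id.smul <| ((hω'.clm_apply continuousOn_const).clm_apply
      continuousOn_const).sub <| (hω'.clm_apply continuousOn_const).clm_apply
      continuousOn_const).intervalIntegrable

end CurveIntegral

section Monodromy

open Set Filter Topology

/-- A foliation of `X × V` transverse to the fibres `V`, described by the plaques over an open
cover of `X`: the graphs of `plaque i v` partition `base i × V`, and plaques that meet agree
locally. -/
structure PlaqueAtlas (ι X V : Type*) [TopologicalSpace X] where
  base : ι → Set X
  isOpen_base : ∀ i, IsOpen (base i)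
  indexAt : X → ι
  mem_base_indexAt : ∀ x, x ∈ base (indexAt x)
  plaque : ι → V → X → V
  bijective_plaque : ∀ i, ∀ x ∈ base i, Function.Bijective (plaque i · x)
  eventually_plaque_eq : ∀ i j, ∀ x ∈ base i ∩ base j, ∀ v w, plaque i v x = plaque j w x →
    ∀ᶠ z in 𝓝 x, plaque i v z = plaque j w z

namespace PlaqueAtlas

variable {ι X V : Type*} [TopologicalSpace X] [Nonempty V] (Z : PlaqueAtlas ι X V)

/-- The parameter of the plaque over `base i` through the point `(x, v)`. -/
def param (i : ι) (x : X) : V → V :=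
  Function.invFun (Z.plaque i · x)

variable {Z} {i : ι} {x : X}

theorem plaque_param (hx : x ∈ Z.base i) (v : V) : Z.plaque i (Z.param i x v) x = v :=
  Function.rightInverse_invFun (Z.bijective_plaque i x hx).2 v

theorem param_plaque (hx : x ∈ Z.base i) (v : V) : Z.param i x (Z.plaque i v x) = v :=
  Function.leftInverse_invFun (Z.bijective_plaque i x hx).1 v

variable (Z)

/-- The bundle over `X` whose sections over `base i` are labelled by plaque parameters; with `V`
discrete, its continuous sections are the functions that locally follow a plaque. -/
def toFiberBundleCore [TopologicalSpace V] [DiscreteTopology V] : FiberBundleCore ι X V where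
  baseSet := Z.base
  isOpen_baseSet := Z.isOpen_base
  indexAt := Z.indexAt
  mem_baseSet_at := Z.mem_base_indexAt
  coordChange i j x v := Z.param j x (Z.plaque i v x)
  coordChange_self _ _ hx v := param_plaque hx v
  continuousOn_coordChange i j := by
    rintro ⟨x, v⟩ ⟨hx, -⟩
    refine ContinuousAt.continuousWithinAt (tendsto_nhds_of_eventually_eq ?_)
    have hagree := Z.eventually_plaque_eq i j x hx v _ (plaque_param hx.2 _).symm
    rw [nhds_prod_eq, nhds_discrete V, prod_pure, eventually_map]
    filter_upwards [hagree, (Z.isOpen_base j).mem_nhds hx.2] with z hz hzj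
    rw [hz, param_plaque hzj]
  coordChange_comp i j k x hx v := by rw [plaque_param hx.1.2]

omit [Nonempty V] in
theorem exists_leaf [SimplyConnectedSpace X] [LocallyPathConnectedSpace X] (x₀ : X) (v₀ : V) :
    ∃ y : X → V, y x₀ = v₀ ∧ ∀ i, ∀ x ∈ Z.base i, ∃ v, ∀ᶠ z in 𝓝 x, y z = Z.plaque i v z := by
  let : TopologicalSpace V := ⊥
  have : DiscreteTopology V := ⟨rfl⟩
  have : Nonempty V := ⟨v₀⟩
  let W := Z.toFiberBundleCore
  obtain ⟨s, ⟨hs₀, hs⟩, -⟩ := (FiberBundle.isCoveringMap (F := V)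
    (E := W.Fiber)).existsUnique_continuousMap_lifts (ContinuousMap.id X) x₀
    ⟨x₀, (Z.param (Z.indexAt x₀) x₀ v₀ : V)⟩ rfl
  have hproj : ∀ x, (s x).proj = x := congrFun hs
  let value (p : W.TotalSpace) : V := Z.plaque (Z.indexAt p.1) p.2 p.1
  refine ⟨fun x => value (s x), ?_, fun i x hx => ?_⟩
  · change value (s x₀) = v₀
    rw [hs₀]
    exact plaque_param (Z.mem_base_indexAt x₀) v₀
  · have hcont : ContinuousAt (fun z => (W.localTriv i (s z)).2) x :=
      continuous_snd.continuousAt.comp <| ((W.localTriv i).continuousAt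
        ((W.mem_localTriv_source i _).2 ((hproj x).symm ▸ hx))).comp s.continuous.continuousAt
    refine ⟨(W.localTriv i (s x)).2, ?_⟩
    filter_upwards [hcont.preimage_mem_nhds ((isOpen_discrete _).mem_nhds (mem_singleton _)),
      (Z.isOpen_base i).mem_nhds hx] with z hz hzi
    have hvalue : Z.plaque i (W.localTriv i (s z)).2 (s z).1 = value (s z) :=
      plaque_param ((hproj z).symm ▸ hzi) _
    rw [← hvalue, show (W.localTriv i (s z)).2 = _ from hz, hproj]

end PlaqueAtlas

end Monodromy

section TotalDifferentialEquation

open Set Filter Topology Metric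

variable {E V : Type*} [NormedAddCommGroup E] [NormedSpace ℝ E]
  [NormedAddCommGroup V] [NormedSpace ℝ V]
  {Ω : E → V →L[ℝ] E →L[ℝ] V} {s : Set E} {y z : E → V} {c x : E} {v : V} {r a : ℝ}

/-- `y` solves the linear total differential equation `dy = Ω y` on `s`; equivalently, it is a
parallel section of the connection `d - Ω` on the trivial bundle with fibre `V`. -/
def IsParallelOn (Ω : E → V →L[ℝ] E →L[ℝ] V) (y : E → V) (s : Set E) : Prop :=
  ∀ x ∈ s, HasFDerivAt y (Ω x (y x)) x

/-- Flatness of the connection `d - Ω`: the second derivative that `dy = Ω y` forces on a solution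
with value `v` at `x` is symmetric. -/
def IsFlatOn (Ω : E → V →L[ℝ] E →L[ℝ] V) (s : Set E) : Prop :=
  ∀ x ∈ s, ∀ v u w, fderiv ℝ Ω x u v w + Ω x (Ω x v u) w = fderiv ℝ Ω x w v u + Ω x (Ω x v w) u

theorem IsFlatOn.mono {t : Set E} (h : IsFlatOn Ω s) (hts : t ⊆ s) : IsFlatOn Ω t :=
  fun x hx => h x (hts hx)

theorem IsParallelOn.mono {t : Set E} (h : IsParallelOn Ω y s) (hts : t ⊆ s) :
    IsParallelOn Ω y t :=
  fun x hx => h x (hts hx)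

-- The defect `dy - Ω y` is the only obstruction to closedness of the one-form `Ω y`.
theorem IsFlatOn.fderiv_apply_apply_sub (hflat : IsFlatOn Ω s) (hx : x ∈ s)
    (hΩ : DifferentiableAt ℝ Ω x) (hy : DifferentiableAt ℝ y x) (u w : E) :
    fderiv ℝ (fun x => Ω x (y x)) x w u - fderiv ℝ (fun x => Ω x (y x)) x u w =
      Ω x ((fderiv ℝ y x - Ω x (y x)) w) u - Ω x ((fderiv ℝ y x - Ω x (y x)) u) w := by
  rw [fderiv_clm_apply hΩ hy]
  simp only [add_apply, ContinuousLinearMap.comp_apply, ContinuousLinearMap.flip_apply, sub_apply,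
    map_sub]
  linear_combination (norm := module) -hflat x hx (y x) u w

/-- The integral operator of the total differential equation `dy = Ω y`, `y c = v`, obtained by
integrating along the segments from `c`. -/
def picardStep (Ω : E → V →L[ℝ] E →L[ℝ] V) (c : E) (v : V) (y : E → V) (x : E) : V :=
  v + ∫ᶜ z in .segment c x, Ω z (y z)

@[simp]
theorem picardStep_self : picardStep Ω c v y c = v := by
  simp [picardStep]

theorem picardStep_zero : picardStep Ω c v (fun _ => 0) x = v := by
  simp [picardStep, curveIntegral_segment]

theorem contDiffOn_picardStep (hs : Convex ℝ s) (hso : IsOpen s) (hc : c ∈ s)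
    (hΩ : ContDiffOn ℝ 1 Ω s) (hy : ContDiffOn ℝ 1 y s) :
    ContDiffOn ℝ 1 (picardStep Ω c v y) s :=
  contDiffOn_const.add (contDiffOn_curveIntegral_segment hs hso hc (hΩ.clm_apply hy))

theorem contDiffOn_picardStep_iterate (hs : Convex ℝ s) (hso : IsOpen s) (hc : c ∈ s)
    (hΩ : ContDiffOn ℝ 1 Ω s) (n : ℕ) :
    ContDiffOn ℝ 1 ((picardStep Ω c v)^[n] fun _ => v) s := by
  induction n with
  | zero => exact contDiffOn_const
  | succ n ih =>
    rw [Function.iterate_succ_apply']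
    exact contDiffOn_picardStep hs hso hc hΩ ih

section LocalExistence

theorem norm_apply_mul_le_of_norm_mul_le {T : V →L[ℝ] E →L[ℝ] V} {b : ℝ} (hT : ‖T‖ * r ≤ b)
    (hr : 0 ≤ r) (v : V) : ‖T v‖ * r ≤ b * ‖v‖ :=
  calc ‖T v‖ * r ≤ ‖T‖ * ‖v‖ * r := by gcongr; exact T.le_opNorm v
    _ = ‖T‖ * r * ‖v‖ := by ring
    _ ≤ b * ‖v‖ := by gcongr

theorem norm_picardStep_sub_le (hΩ : ContinuousOn Ω (ball c r))
    (hr : ∀ x ∈ ball c r, ‖Ω x‖ * r ≤ 1 / 8) (hy : ContinuousOn y (ball c r))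
    (hz : ContinuousOn z (ball c r)) (hyz : ∀ x ∈ ball c r, ‖y x - z x‖ ≤ a)
    (hx : x ∈ ball c r) :
    ‖picardStep Ω c v y x - picardStep Ω c v z x‖ ≤ a / 8 := by
  have hr₀ : 0 < r := pos_of_mem_ball hx
  have hseg : segment ℝ c x ⊆ ball c r :=
    (convex_ball c r).segment_subset (mem_ball_self hr₀) hx
  have hint : ∀ y : E → V, ContinuousOn y (ball c r) →
      CurveIntegrable (fun z => Ω z (y z)) (.segment c x) := fun y hy =>
    curveIntegrable_segment.2 <| ContinuousOn.intervalIntegrable <|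
      (((hΩ.clm_apply hy).comp AffineMap.lineMap_continuous.continuousOn fun t ht =>
        (convex_ball c r).lineMap_mem (mem_ball_self hr₀) hx
          (uIcc_of_le (zero_le_one' ℝ) ▸ ht)).clm_apply continuousOn_const)
  have hbound : ∀ p ∈ segment ℝ c x, ‖Ω p (y p) - Ω p (z p)‖ ≤ a / 8 / r := by
    intro p hp
    rw [← map_sub, le_div_iff₀ hr₀]
    calc ‖Ω p (y p - z p)‖ * r ≤ 1 / 8 * ‖y p - z p‖ :=
          norm_apply_mul_le_of_norm_mul_le (hr p (hseg hp)) hr₀.le _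
      _ ≤ a / 8 := by linarith [hyz p (hseg hp)]
  have ha : 0 ≤ a := (norm_nonneg _).trans (hyz x hx)
  rw [picardStep, picardStep, add_sub_add_left_eq_sub, ← curveIntegral_fun_sub (hint y hy)
    (hint z hz)]
  calc _ ≤ a / 8 / r * ‖x - c‖ := norm_curveIntegral_segment_le hbound
    _ ≤ a / 8 / r * r := by gcongr; exact (mem_ball_iff_norm.1 hx).le
    _ = a / 8 := div_mul_cancel₀ _ hr₀.ne'

theorem norm_picardStep_iterate_sub_le (hΩ : ContDiffOn ℝ 1 Ω (ball c r))
    (hr : ∀ x ∈ ball c r, ‖Ω x‖ * r ≤ 1 / 8) (n : ℕ) (hx : x ∈ ball c r) :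
    ‖(picardStep Ω c v)^[n] (fun _ => v) x - (picardStep Ω c v)^[n + 1] (fun _ => v) x‖ ≤
      ‖v‖ / 2 / 2 ^ n := by
  have hcont := fun n => (contDiffOn_picardStep_iterate (v := v) (convex_ball c r) isOpen_ball
    (mem_ball_self (pos_of_mem_ball hx)) hΩ n).continuousOn
  induction n generalizing x with
  | zero =>
    have h := norm_picardStep_sub_le (v := v) (y := fun _ => 0) (z := fun _ => v) (a := ‖v‖)
      hΩ.continuousOn hr continuousOn_const continuousOn_const (by simp) hx
    rw [picardStep_zero] at h
    simpa using h.trans (by linarith [norm_nonneg v])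
  | succ n ih =>
    rw [Function.iterate_succ_apply', Function.iterate_succ_apply' _ (n + 1)]
    refine (norm_picardStep_sub_le hΩ.continuousOn hr (hcont n) (hcont (n + 1))
      (fun z hz => ih hz) hx).trans ?_
    rw [pow_succ, ← div_div]
    gcongr
    norm_num

theorem norm_apply_apply_sub_apply_apply_le (T : V →L[ℝ] E →L[ℝ] V) (e : E →L[ℝ] V) (u w : E) :
    ‖T (e w) u - T (e u) w‖ ≤ 2 * ‖T‖ * ‖u‖ * ‖e‖ * ‖w‖ := by
  have hterm : ∀ u w, ‖T (e w) u‖ ≤ ‖T‖ * (‖e‖ * ‖w‖) * ‖u‖ := fun u w =>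
    (T.le_opNorm₂ (e w) u).trans (by gcongr; exact e.le_opNorm w)
  calc ‖T (e w) u - T (e u) w‖ ≤ ‖T (e w) u‖ + ‖T (e u) w‖ := norm_sub_le _ _
    _ ≤ ‖T‖ * (‖e‖ * ‖w‖) * ‖u‖ + ‖T‖ * (‖e‖ * ‖u‖) * ‖w‖ := add_le_add (hterm u w) (hterm w u)
    _ = 2 * ‖T‖ * ‖u‖ * ‖e‖ * ‖w‖ := by ring

variable [CompleteSpace V]

theorem norm_fderiv_picardStep_sub_le (hΩ : ContDiffOn ℝ 1 Ω (ball c r))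
    (hflat : IsFlatOn Ω (ball c r)) (hr : ∀ x ∈ ball c r, ‖Ω x‖ * r ≤ 1 / 8)
    (hy : ContDiffOn ℝ 1 y (ball c r))
    (hdefect : ∀ x ∈ ball c r, ‖fderiv ℝ y x - Ω x (y x)‖ ≤ a) (hx : x ∈ ball c r) :
    ‖fderiv ℝ (picardStep Ω c v y) x - Ω x (y x)‖ ≤ a / 4 := by
  have hr₀ : 0 ≤ r := (pos_of_mem_ball hx).le
  have hc : c ∈ ball c r := mem_ball_self (pos_of_mem_ball hx)
  have ha : 0 ≤ a := (norm_nonneg _).trans (hdefect x hx)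
  refine ContinuousLinearMap.opNorm_le_bound _ (by positivity) fun w => ?_
  have hstep : fderiv ℝ (picardStep Ω c v y) x =
      fderiv ℝ (fun x => ∫ᶜ z in .segment c x, Ω z (y z)) x :=
    fderiv_const_add v
  rw [sub_apply, hstep, fderiv_curveIntegral_segment_apply (convex_ball c r)
    isOpen_ball hc (hΩ.clm_apply hy) hx, add_sub_cancel_left]
  suffices ∀ t ∈ uIoc (0 : ℝ) 1, ‖t • (fderiv ℝ (fun z => Ω z (y z)) (AffineMap.lineMap c x t) w
      (x - c) - fderiv ℝ (fun z => Ω z (y z)) (AffineMap.lineMap c x t) (x - c) w)‖ ≤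
      a / 4 * ‖w‖ by
    simpa using intervalIntegral.norm_integral_le_of_norm_le_const this
  intro t ht
  rw [uIoc_of_le zero_le_one] at ht
  have hp := (convex_ball c r).lineMap_mem hc hx ⟨ht.1.le, ht.2⟩
  set p := AffineMap.lineMap c x t
  have hnhds : ball c r ∈ 𝓝 p := isOpen_ball.mem_nhds hp
  rw [hflat.fderiv_apply_apply_sub hp ((hΩ.differentiableOn one_ne_zero).differentiableAt hnhds)
    ((hy.differentiableOn one_ne_zero).differentiableAt hnhds), norm_smul,
    Real.norm_of_nonneg ht.1.le]
  set e := fderiv ℝ y p - Ω p (y p)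
  calc t * ‖Ω p (e w) (x - c) - Ω p (e (x - c)) w‖
      ≤ 1 * (2 * ‖Ω p‖ * ‖x - c‖ * ‖e‖ * ‖w‖) := by
        gcongr
        exacts [ht.2, norm_apply_apply_sub_apply_apply_le _ _ _ _]
    _ ≤ 1 * (2 * ‖Ω p‖ * r * a * ‖w‖) := by
        gcongr
        exacts [(mem_ball_iff_norm.1 hx).le, hdefect p hp]
    _ = 2 * (‖Ω p‖ * r) * a * ‖w‖ := by ring
    _ ≤ 2 * (1 / 8) * a * ‖w‖ := by gcongr; exact hr p hp
    _ = a / 4 * ‖w‖ := by ring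

theorem norm_fderiv_picardStep_iterate_sub_le (hΩ : ContDiffOn ℝ 1 Ω (ball c r))
    (hflat : IsFlatOn Ω (ball c r)) (hr : ∀ x ∈ ball c r, ‖Ω x‖ * r ≤ 1 / 8) (n : ℕ)
    (hx : x ∈ ball c r) :
    ‖fderiv ℝ ((picardStep Ω c v)^[n] fun _ => v) x -
      Ω x ((picardStep Ω c v)^[n] (fun _ => v) x)‖ ≤ ‖v‖ / r / 2 ^ n := by
  have hr₀ : 0 < r := pos_of_mem_ball hx
  have hΩr : ∀ x ∈ ball c r, ∀ v', ‖Ω x v'‖ ≤ 1 / 8 * ‖v'‖ / r := fun x hx v' =>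
    (le_div_iff₀ hr₀).2 (norm_apply_mul_le_of_norm_mul_le (hr x hx) hr₀.le v')
  induction n generalizing x with
  | zero =>
    simp only [Function.iterate_zero, id, fderiv_fun_const, Pi.zero_apply, zero_sub, norm_neg,
      pow_zero, div_one]
    refine (hΩr x hx v).trans ?_
    gcongr
    linarith [norm_nonneg v]
  | succ n ih =>
    set u := (picardStep Ω c v)^[n] fun _ => v
    have hu₁ : (picardStep Ω c v)^[n + 1] (fun _ => v) = picardStep Ω c v u :=
      Function.iterate_succ_apply' _ _ _
    have hdist : ‖u x - picardStep Ω c v u x‖ ≤ ‖v‖ / 2 / 2 ^ n :=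
      hu₁ ▸ norm_picardStep_iterate_sub_le hΩ hr n hx
    rw [hu₁]
    calc _ ≤ ‖fderiv ℝ (picardStep Ω c v u) x - Ω x (u x)‖ +
          ‖Ω x (u x) - Ω x (picardStep Ω c v u x)‖ := norm_sub_le_norm_sub_add_norm_sub _ _ _
      _ ≤ ‖v‖ / r / 2 ^ n / 4 + 1 / 8 * (‖v‖ / 2 / 2 ^ n) / r := by
          gcongr
          · exact norm_fderiv_picardStep_sub_le hΩ hflat hr (contDiffOn_picardStep_iterate
              (convex_ball c r) isOpen_ball (mem_ball_self hr₀) hΩ n) (fun z hz => ih hz) hx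
          · rw [← map_sub]
            exact (hΩr x hx _).trans (by gcongr)
      _ = 5 / 8 * (‖v‖ / r / 2 ^ (n + 1)) := by field_simp; ring
      _ ≤ ‖v‖ / r / 2 ^ (n + 1) := mul_le_of_le_one_left (by positivity) (by norm_num)

theorem exists_forall_tendsto_picardStep_iterate (hΩ : ContDiffOn ℝ 1 Ω (ball c r))
    (hr : ∀ x ∈ ball c r, ‖Ω x‖ * r ≤ 1 / 8) (v : V) :
    ∃ y : E → V, ∀ x ∈ ball c r,
      Tendsto (fun n => (picardStep Ω c v)^[n] (fun _ => v) x) atTop (𝓝 (y x)) ∧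
      ∀ n, ‖(picardStep Ω c v)^[n] (fun _ => v) x - y x‖ ≤ ‖v‖ / 2 ^ n := by
  choose! y hy using fun x (hx : x ∈ ball c r) =>
    cauchySeq_tendsto_of_complete <| cauchySeq_of_le_geometric_two fun n =>
      (dist_eq_norm _ _).trans_le (norm_picardStep_iterate_sub_le (v := v) hΩ hr n hx)
  refine ⟨y, fun x hx => ⟨hy x hx, fun n => ?_⟩⟩
  rw [← dist_eq_norm]
  exact dist_le_of_le_geometric_two_of_tendsto (fun n =>
    (dist_eq_norm _ _).trans_le (norm_picardStep_iterate_sub_le hΩ hr n hx)) (hy x hx) n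

theorem IsFlatOn.exists_isParallelOn_ball (hflat : IsFlatOn Ω (ball c r)) (hr₀ : 0 < r)
    (hΩ : ContDiffOn ℝ 1 Ω (ball c r)) (hr : ∀ x ∈ ball c r, ‖Ω x‖ * r ≤ 1 / 8) (v : V) :
    ∃ y, IsParallelOn Ω y (ball c r) ∧ y c = v := by
  have hc : c ∈ ball c r := mem_ball_self hr₀
  let u : ℕ → E → V := fun n => (picardStep Ω c v)^[n] fun _ => v
  obtain ⟨y, hy⟩ : ∃ y : E → V, ∀ x ∈ ball c r, Tendsto (u · x) atTop (𝓝 (y x)) ∧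
      ∀ n, ‖u n x - y x‖ ≤ ‖v‖ / 2 ^ n :=
    exists_forall_tendsto_picardStep_iterate hΩ hr v
  have huc : ∀ n, u n c = v
    | 0 => rfl
    | n + 1 => by simp only [u, Function.iterate_succ_apply', picardStep_self]
  have hdefect : ∀ n, ∀ p ∈ ball c r,
      ‖Ω p (y p) - fderiv ℝ (u n) p‖ ≤ 9 / 8 * (‖v‖ / r) / 2 ^ n := by
    intro n p hp
    have hΩp : ‖Ω p (u n p - y p)‖ ≤ 1 / 8 * (‖v‖ / 2 ^ n) / r :=
      (le_div_iff₀ hr₀).2 <| (norm_apply_mul_le_of_norm_mul_le (hr p hp) hr₀.le _).trans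
        (by gcongr; exact (hy p hp).2 n)
    calc ‖Ω p (y p) - fderiv ℝ (u n) p‖ ≤ ‖fderiv ℝ (u n) p - Ω p (u n p)‖ +
          ‖Ω p (u n p) - Ω p (y p)‖ := by
          rw [norm_sub_rev]; exact norm_sub_le_norm_sub_add_norm_sub _ _ _
      _ ≤ ‖v‖ / r / 2 ^ n + 1 / 8 * (‖v‖ / 2 ^ n) / r :=
          add_le_add (norm_fderiv_picardStep_iterate_sub_le hΩ hflat hr n hp)
            (map_sub (Ω p) _ _ ▸ hΩp)
      _ = 9 / 8 * (‖v‖ / r) / 2 ^ n := by ring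
  have hlim : TendstoUniformlyOn (fun n => fderiv ℝ (u n)) (fun x => Ω x (y x)) atTop
      (ball c r) := by
    have hbound : Tendsto (fun n : ℕ => 9 / 8 * (‖v‖ / r) / 2 ^ n) atTop (𝓝 0) :=
      tendsto_const_nhds.div_atTop (tendsto_pow_atTop_atTop_of_one_lt one_lt_two)
    refine Metric.tendstoUniformlyOn_iff.2 fun ε hε => ?_
    filter_upwards [hbound.eventually_lt_const hε] with n hn p hp
    exact (dist_eq_norm _ _).trans_lt ((hdefect n p hp).trans_lt hn)
  refine ⟨y, fun x hx => ?_, tendsto_nhds_unique (hy c hc).1 (by simp [huc])⟩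
  refine hasFDerivAt_of_tendstoUniformlyOn isOpen_ball hlim (fun n p hp => ?_)
    (fun p hp => (hy p hp).1) hx
  exact (((contDiffOn_picardStep_iterate (convex_ball c r) isOpen_ball hc hΩ
    n).differentiableOn one_ne_zero).differentiableAt (isOpen_ball.mem_nhds hp)).hasFDerivAt

end LocalExistence

section GlobalExistence

theorem IsParallelOn.eqOn (hy : IsParallelOn Ω y s) (hz : IsParallelOn Ω z s) (hs : Convex ℝ s)
    {C : ℝ} (hC : ∀ x ∈ s, ‖Ω x‖ ≤ C) (hc : c ∈ s) (hyz : y c = z c) : EqOn y z s := by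
  intro x hx
  have hmem : ∀ t ∈ Icc (0 : ℝ) 1, AffineMap.lineMap c x t ∈ s := fun t ht =>
    hs.lineMap_mem hc hx ht
  set d : ℝ → V := fun t => y (AffineMap.lineMap c x t) - z (AffineMap.lineMap c x t)
  have hderiv : ∀ t ∈ Icc (0 : ℝ) 1,
      HasDerivAt d (Ω (AffineMap.lineMap c x t) (d t) (x - c)) t := fun t ht =>
    (((hy _ (hmem t ht)).comp_hasDerivAt t AffineMap.hasDerivAt_lineMap).sub
      ((hz _ (hmem t ht)).comp_hasDerivAt t AffineMap.hasDerivAt_lineMap)).congr_deriv (by simp [d])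
  have hbound : ∀ t ∈ Icc (0 : ℝ) 1,
      ‖Ω (AffineMap.lineMap c x t) (d t) (x - c)‖ ≤ C * ‖x - c‖ * ‖d t‖ := fun t ht =>
    calc _ ≤ ‖Ω (AffineMap.lineMap c x t)‖ * ‖d t‖ * ‖x - c‖ := ContinuousLinearMap.le_opNorm₂ _ _ _
      _ ≤ C * ‖d t‖ * ‖x - c‖ := by gcongr; exact hC _ (hmem t ht)
      _ = C * ‖x - c‖ * ‖d t‖ := by ring
  have hd : d 1 = 0 := eq_zero_of_abs_deriv_le_mul_abs_self_of_eq_zero_right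
    (fun t ht => (hderiv t ht).continuousAt.continuousWithinAt)
    (fun t ht => (hderiv t (Ico_subset_Icc_self ht)).hasDerivWithinAt) (by simp [d, hyz])
    (fun t ht => hbound t (Ico_subset_Icc_self ht)) 1 (by simp)
  simpa [d, sub_eq_zero] using hd

/-- A ball on which every initial value of `dy = Ω y` extends to a solution, from every point. -/
structure IsSolvableBall (Ω : E → V →L[ℝ] E →L[ℝ] V) (c : E) (r : ℝ) : Prop where
  pos : 0 < r
  exists_norm_le : ∃ C, ∀ x ∈ ball c r, ‖Ω x‖ ≤ C
  exists_isParallelOn : ∀ x ∈ ball c r, ∀ v, ∃ y, IsParallelOn Ω y (ball c r) ∧ y x = v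

theorem IsFlatOn.exists_isSolvableBall [CompleteSpace V] (hflat : IsFlatOn Ω s) (hs : IsOpen s)
    (hΩ : ContDiffOn ℝ 1 Ω s) (hc : c ∈ s) : ∃ r, ball c r ⊆ s ∧ IsSolvableBall Ω c r := by
  have hcont : ContinuousAt (fun x => ‖Ω x‖) c :=
    ContinuousAt.norm (E := V →L[ℝ] E →L[ℝ] V) (hΩ.continuousOn.continuousAt (hs.mem_nhds hc))
  have hnorm : ∀ᶠ x in 𝓝 c, ‖Ω x‖ < ‖Ω c‖ + 1 := hcont.eventually_lt_const (lt_add_one _)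
  obtain ⟨R, hR, hRs⟩ := eventually_nhds_iff_ball.1 (hnorm.and (hs.mem_nhds hc))
  set C := ‖Ω c‖ + 1
  have : 0 < C := by positivity
  -- Balls of radius `2 r` around points of `ball c r` stay in `ball c R`.
  set r := min (R / 3) (1 / 8 / (2 * C))
  have hr : 0 < r := by positivity
  have hrR : 3 * r ≤ R := by linarith [min_le_left (R / 3) (1 / 8 / (2 * C))]
  have hCr : C * (2 * r) ≤ 1 / 8 := by
    have := (le_div_iff₀ (by positivity)).1 (min_le_right (R / 3) (1 / 8 / (2 * C)))
    linarith
  have hsub : ball c r ⊆ ball c R := ball_subset_ball (by linarith)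
  refine ⟨r, fun x hx => (hRs x (hsub hx)).2, hr, ⟨C, fun x hx => (hRs x (hsub hx)).1.le⟩,
    fun x hx v => ?_⟩
  have hxR : ball x (2 * r) ⊆ ball c R := ball_subset_ball' (by linarith [mem_ball.1 hx])
  obtain ⟨y, hy, hyx⟩ := (hflat.mono fun z hz => (hRs z (hxR hz)).2).exists_isParallelOn_ball
    (c := x) (r := 2 * r) (by positivity) (hΩ.mono fun z hz => (hRs z (hxR hz)).2) (fun z hz =>
      (mul_le_mul_of_nonneg_right (hRs z (hxR hz)).1.le (by positivity)).trans hCr) v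
  exact ⟨y, hy.mono (ball_subset_ball' (by linarith [mem_ball'.1 hx])), hyx⟩

namespace IsSolvableBall

theorem mem_self (h : IsSolvableBall Ω c r) : c ∈ ball c r :=
  mem_ball_self h.pos

/-- The solution on `ball c r` with value `v` at the centre. -/
def solution (h : IsSolvableBall Ω c r) (v : V) : E → V :=
  (h.exists_isParallelOn c h.mem_self v).choose

theorem isParallelOn_solution (h : IsSolvableBall Ω c r) (v : V) :
    IsParallelOn Ω (h.solution v) (ball c r) :=
  (h.exists_isParallelOn c h.mem_self v).choose_spec.1

theorem solution_self (h : IsSolvableBall Ω c r) (v : V) : h.solution v c = v :=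
  (h.exists_isParallelOn c h.mem_self v).choose_spec.2

theorem bijective_solution (h : IsSolvableBall Ω c r) (hx : x ∈ ball c r) :
    Function.Bijective (h.solution · x) := by
  obtain ⟨C, hC⟩ := h.exists_norm_le
  refine ⟨fun v w hvw => ?_, fun w => ?_⟩
  · have := (h.isParallelOn_solution v).eqOn (h.isParallelOn_solution w) (convex_ball c r) hC hx
      hvw h.mem_self
    rwa [h.solution_self, h.solution_self] at this
  · obtain ⟨z, hz, hzx⟩ := h.exists_isParallelOn x hx w
    exact ⟨z c, ((h.isParallelOn_solution (z c)).eqOn hz (convex_ball c r) hC h.mem_self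
      (h.solution_self _) hx).trans hzx⟩

theorem eventually_solution_eq {c' : E} {r' : ℝ} (h : IsSolvableBall Ω c r)
    (h' : IsSolvableBall Ω c' r') (hx : x ∈ ball c r ∩ ball c' r') {v w : V}
    (hvw : h.solution v x = h'.solution w x) :
    ∀ᶠ z in 𝓝 x, h.solution v z = h'.solution w z := by
  obtain ⟨C, hC⟩ := h.exists_norm_le
  filter_upwards [(isOpen_ball.inter isOpen_ball).mem_nhds hx] with z hz
  exact ((h.isParallelOn_solution v).mono inter_subset_left).eqOn
    ((h'.isParallelOn_solution w).mono inter_subset_right)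
    ((convex_ball c r).inter (convex_ball c' r')) (fun p hp => hC p hp.1) hx hvw hz

/-- The foliation of `s × V` by the graphs of the local solutions of `dy = Ω y`. -/
def plaqueAtlas {r : s → ℝ} (h : ∀ c : s, IsSolvableBall Ω c (r c)) : PlaqueAtlas s s V where
  base c := Subtype.val ⁻¹' ball (c : E) (r c)
  isOpen_base _ := isOpen_ball.preimage continuous_subtype_val
  indexAt := id
  mem_base_indexAt c := (h c).mem_self
  plaque c v x := (h c).solution v x
  bijective_plaque c _ hx := (h c).bijective_solution hx
  eventually_plaque_eq c c' _ hx _ _ hvw :=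
    continuous_subtype_val.continuousAt.eventually ((h c).eventually_solution_eq (h c') hx hvw)

end IsSolvableBall

variable [CompleteSpace V]

theorem IsFlatOn.exists_isParallelOn (hflat : IsFlatOn Ω s) (hs : IsOpen s)
    (hsc : SimplyConnectedSpace s) (hΩ : ContDiffOn ℝ 1 Ω s) (hc : c ∈ s) (v : V) :
    ∃ y, IsParallelOn Ω y s ∧ y c = v := by
  have := hs.locallyPathConnectedSpace
  choose r _ hr using fun c : s => hflat.exists_isSolvableBall hs hΩ c.2
  obtain ⟨y, hyc, hy⟩ := (IsSolvableBall.plaqueAtlas hr).exists_leaf ⟨c, hc⟩ v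
  refine ⟨Function.extend (↑) y 0, fun x hx => ?_, ?_⟩
  · obtain ⟨w, hw⟩ := hy ⟨x, hx⟩ ⟨x, hx⟩ (hr ⟨x, hx⟩).mem_self
    have heq : Function.extend (↑) y 0 =ᶠ[𝓝 x] (hr ⟨x, hx⟩).solution w := by
      rw [← hs.nhdsWithin_eq hx, nhdsWithin_eq_map_subtype_coe hx]
      refine eventually_map.2 (hw.mono fun z hz => ?_)
      exact (Subtype.val_injective.extend_apply y 0 z).trans hz
    rw [heq.eq_of_nhds]
    exact ((hr ⟨x, hx⟩).isParallelOn_solution w x (hr ⟨x, hx⟩).mem_self).congr_of_eventuallyEq heq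
  · exact (Subtype.val_injective.extend_apply y 0 ⟨c, hc⟩).trans hyc

omit [CompleteSpace V] in
theorem IsParallelOn.contDiffOn {n : ℕ∞} (hy : IsParallelOn Ω y s) (hs : IsOpen s)
    (hΩ : ContDiffOn ℝ n Ω s) : ContDiffOn ℝ n y s := by
  refine contDiffOn_iff_forall_nat_le.2 fun k hk => ?_
  induction k with
  | zero => exact contDiffOn_zero.2 fun x hx => (hy x hx).continuousAt.continuousWithinAt
  | succ k ih =>
    have hkn : (k : ℕ∞) ≤ n := (Nat.cast_le.2 k.le_succ).trans hk
    rw [Nat.cast_succ, contDiffOn_succ_iff_fderiv_of_isOpen hs]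
    refine ⟨fun x hx => (hy x hx).differentiableAt.differentiableWithinAt, by simp, ?_⟩
    exact ((hΩ.of_le (by exact_mod_cast hkn)).clm_apply (ih hkn)).congr
      fun x hx => (hy x hx).fderiv

end GlobalExistence

end TotalDifferentialEquation

section CoordinateConnection

open ContinuousLinearMap

variable {ι V : Type*} [Fintype ι] [NormedAddCommGroup V] [NormedSpace ℝ V]
  {C : ι → (ι → ℝ) → V →L[ℝ] V} {s : Set (ι → ℝ)} {x : ι → ℝ}

/-- The connection form `∑ₖ C k dxₖ` in the argument order used by `IsParallelOn`. -/
def coordConnection (C : ι → (ι → ℝ) → V →L[ℝ] V) (x : ι → ℝ) : V →L[ℝ] (ι → ℝ) →L[ℝ] V :=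
  ∑ k, smulRightL ℝ (ι → ℝ) V (proj k) ∘L C k x

theorem coordConnection_apply (v : V) (w : ι → ℝ) :
    coordConnection C x v w = ∑ k, w k • C k x v := by
  simp [coordConnection, sum_apply]

theorem contDiffOn_coordConnection {n : WithTop ℕ∞} (hC : ∀ k, ContDiffOn ℝ n (C k) s) :
    ContDiffOn ℝ n (coordConnection C) s :=
  ContDiffOn.sum fun k _ => contDiffOn_const.clm_comp (hC k)

theorem fderiv_coordConnection_apply (hC : ∀ k, DifferentiableAt ℝ (C k) x) (u w : ι → ℝ)
    (v : V) : fderiv ℝ (coordConnection C) x u v w = ∑ k, w k • fderiv ℝ (C k) x u v := by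
  have h : HasFDerivAt (coordConnection C) _ x := HasFDerivAt.fun_sum fun k _ =>
    (hasFDerivAt_const (smulRightL ℝ (ι → ℝ) V (proj k)) x).clm_comp (hC k).hasFDerivAt
  simp [h.fderiv, sum_apply]

variable [DecidableEq ι]

theorem coordConnection_apply_single (v : V) (k : ι) :
    coordConnection C x v (Pi.single k 1) = C k x v := by
  simp [coordConnection_apply, Pi.single_apply]

theorem isFlatOn_coordConnection (hC : ∀ k, ∀ x ∈ s, DifferentiableAt ℝ (C k) x)
    (hflat : ∀ k l, ∀ x ∈ s, ∀ v, fderiv ℝ (C l) x (Pi.single k 1) v + C l x (C k x v) =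
      fderiv ℝ (C k) x (Pi.single l 1) v + C k x (C l x v)) :
    IsFlatOn (coordConnection C) s := by
  intro x hx v u w
  have hexpand : ∀ u w : ι → ℝ, fderiv ℝ (coordConnection C) x u v w +
      coordConnection C x (coordConnection C x v u) w =
      ∑ l, ∑ k, (w l * u k) • (fderiv ℝ (C l) x (Pi.single k 1) v + C l x (C k x v)) := by
    intro u w
    have hu : ∀ l, fderiv ℝ (C l) x u v = ∑ k, u k • fderiv ℝ (C l) x (Pi.single k 1) v := by
      intro l
      conv_lhs => rw [pi_eq_sum_univ' u]
      simp [sum_apply]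
    simp only [fderiv_coordConnection_apply (hC · x hx), coordConnection_apply]
    simp only [hu, map_sum, map_smul, Finset.smul_sum, smul_smul, smul_add,
      Finset.sum_add_distrib]
  rw [hexpand, hexpand, Finset.sum_comm]
  exact Finset.sum_congr rfl fun k _ => Finset.sum_congr rfl fun l _ => by
    rw [hflat k l x hx, mul_comm]

end CoordinateConnection

section MovingFrame

open ContinuousLinearMap
open scoped Matrix.Norms.Elementwise

variable {m N : ℕ} {U : Set (Fin m → ℝ)} {x : Fin m → ℝ}

theorem differentiableAt_of_contDiffOn {V : Type*} [NormedAddCommGroup V] [NormedSpace ℝ V]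
    {E : Type*} [NormedAddCommGroup E] [NormedSpace ℝ E] {s : Set E} {f : E → V} {y : E} {n : ℕ∞}
    (hn : 1 ≤ n) (hs : IsOpen s) (hf : ContDiffOn ℝ n f s) (hy : y ∈ s) :
    DifferentiableAt ℝ f y :=
  (hf.contDiffAt (hs.mem_nhds hy)).differentiableAt
    (by exact_mod_cast (zero_lt_one.trans_le hn).ne')

theorem pdr_apply {f : (Fin m → ℝ) → Fin N → ℝ} (hf : DifferentiableAt ℝ f x) (k : Fin m)
    (i : Fin N) : pdr k (fun q => f q i) x = pd k f x i := by
  rw [pdr, pd, fderiv_apply hf]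
  rfl

theorem fderiv_single_eq_pdM {A : (Fin m → ℝ) → Matrix (Fin N) (Fin N) ℝ}
    (hA : ∀ i j, DifferentiableAt ℝ (fun q => A q i j) x) (k : Fin m) :
    fderiv ℝ A x (Pi.single k 1) = pdM k A x := by
  ext i j
  have hrow : ∀ i, DifferentiableAt ℝ (fun q => A q i) x := fun i => differentiableAt_pi.2 (hA i)
  rw [pdM, Matrix.of_apply, pdr_apply (hrow i), pd]
  exact congrFun (congrArg (· (Pi.single k 1)) (fderiv_apply (differentiableAt_pi.2 hrow) i)).symm j

/-- The infinitesimal change `(v, a) ↦ (v A, v ⬝ g)` of a row `v` of the frame `F` and the matching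
coordinate `a` of the map `f` under `∂F = F A`, `∂f = F g`. -/
def frameOperator : Matrix (Fin N) (Fin N) ℝ × (Fin N → ℝ) →L[ℝ]
    (Fin N → ℝ) × ℝ →L[ℝ] (Fin N → ℝ) × ℝ :=
  IsBilinearMap.toContinuousBilinearMap (𝕜 := ℝ) (f := fun B v => (v.1 ᵥ* B.1, v.1 ⬝ᵥ B.2))
  { add_left := by simp [Matrix.vecMul_add]
    smul_left := by simp [Matrix.vecMul_smul]
    add_right := by simp [Matrix.add_vecMul]
    smul_right := by simp [Matrix.smul_vecMul] }

theorem frameOperator_apply (A : Matrix (Fin N) (Fin N) ℝ) (g : Fin N → ℝ)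
    (v : (Fin N → ℝ) × ℝ) : frameOperator (A, g) v = (v.1 ᵥ* A, v.1 ⬝ᵥ g) :=
  rfl

theorem fderiv_frameOperator_apply {A : (Fin m → ℝ) → Matrix (Fin N) (Fin N) ℝ}
    {g : (Fin m → ℝ) → Fin N → ℝ} (hA : ∀ i j, DifferentiableAt ℝ (fun q => A q i j) x)
    (hg : DifferentiableAt ℝ g x) (k : Fin m) :
    fderiv ℝ (fun q => frameOperator (A q, g q)) x (Pi.single k 1) =
      frameOperator (pdM k A x, pd k g x) := by
  have hA' : DifferentiableAt ℝ A x :=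
    differentiableAt_pi.2 fun i => differentiableAt_pi.2 (hA i)
  have h : HasFDerivAt (fun q => frameOperator (A q, g q)) _ x :=
    frameOperator.hasFDerivAt.comp x (hA'.hasFDerivAt.prodMk hg.hasFDerivAt)
  rw [h.fderiv, ← fderiv_single_eq_pdM hA]
  rfl

theorem isFlatOn_coordConnection_frameOperator
    {A : Fin m → (Fin m → ℝ) → Matrix (Fin N) (Fin N) ℝ} {g : Fin m → (Fin m → ℝ) → Fin N → ℝ}
    (hA : ∀ k i j, ∀ q ∈ U, DifferentiableAt ℝ (fun q => A k q i j) q)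
    (hg : ∀ k, ∀ q ∈ U, DifferentiableAt ℝ (g k) q)
    (hcurv : ∀ k l, ∀ q ∈ U,
      pdM k (A l) q - pdM l (A k) q = A l q * A k q - A k q * A l q)
    (htors : ∀ k l, ∀ q ∈ U,
      pd k (g l) q - pd l (g k) q = A l q *ᵥ g k q - A k q *ᵥ g l q) :
    IsFlatOn (coordConnection fun k q => frameOperator (A k q, g k q)) U := by
  refine isFlatOn_coordConnection (fun k q hq => ?_) fun k l q hq v => ?_
  · exact frameOperator.differentiableAt.comp q <|
      (differentiableAt_pi.2 fun i => differentiableAt_pi.2 (hA k i · q hq)).prodMk (hg k q hq)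
  · rw [fderiv_frameOperator_apply (hA l · · q hq) (hg l q hq),
      fderiv_frameOperator_apply (hA k · · q hq) (hg k q hq)]
    simp only [frameOperator_apply, Prod.mk_add_mk, Matrix.vecMul_vecMul,
      ← Matrix.dotProduct_mulVec, ← Matrix.vecMul_add, ← dotProduct_add]
    rw [sub_eq_sub_iff_add_eq_add.1 (hcurv k l q hq), add_comm (A l q * A k q),
      sub_eq_sub_iff_add_eq_add.1 (htors k l q hq), add_comm (A l q *ᵥ g k q)]

theorem exists_movingFrame {n : ℕ∞} (hn : 1 ≤ n) (hU : IsOpen U) (hsc : SimplyConnectedSpace U)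
    {A : Fin m → (Fin m → ℝ) → Matrix (Fin N) (Fin N) ℝ} {g : Fin m → (Fin m → ℝ) → Fin N → ℝ}
    (hA : ∀ k i j, ContDiffOn ℝ n (fun q => A k q i j) U) (hg : ∀ k, ContDiffOn ℝ n (g k) U)
    (hcurv : ∀ k l, ∀ q ∈ U,
      pdM k (A l) q - pdM l (A k) q = A l q * A k q - A k q * A l q)
    (htors : ∀ k l, ∀ q ∈ U,
      pd k (g l) q - pd l (g k) q = A l q *ᵥ g k q - A k q *ᵥ g l q)
    (hx : x ∈ U) (F₀ : Matrix (Fin N) (Fin N) ℝ) (f₀ : Fin N → ℝ) :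
    ∃ (F : (Fin m → ℝ) → Matrix (Fin N) (Fin N) ℝ) (f : (Fin m → ℝ) → Fin N → ℝ),
      F x = F₀ ∧ f x = f₀ ∧
      (∀ i j, ContDiffOn ℝ n (fun q => F q i j) U) ∧ ContDiffOn ℝ n f U ∧
      (∀ k, ∀ q ∈ U, pdM k F q = F q * A k q) ∧ (∀ k, ∀ q ∈ U, pd k f q = F q *ᵥ g k q) := by
  set Ω := coordConnection fun k q => frameOperator (A k q, g k q)
  have hΩ : ContDiffOn ℝ n Ω U := contDiffOn_coordConnection fun k =>
    frameOperator.contDiff.comp_contDiffOn <|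
      (contDiffOn_pi.2 fun i => contDiffOn_pi.2 (hA k i)).prodMk (hg k)
  have hflat : IsFlatOn Ω U := isFlatOn_coordConnection_frameOperator
    (fun k i j q hq => differentiableAt_of_contDiffOn hn hU (hA k i j) hq)
    (fun k q hq => differentiableAt_of_contDiffOn hn hU (hg k) hq) hcurv htors
  choose y hy hyx using fun i =>
    hflat.exists_isParallelOn hU hsc (hΩ.of_le (by exact_mod_cast hn)) hx (F₀ i, f₀ i)
  have hsmooth : ∀ i, ContDiffOn ℝ n (y i) U := fun i => (hy i).contDiffOn hU hΩ
  refine ⟨fun q i => (y i q).1, fun q i => (y i q).2, funext fun i => congrArg Prod.fst (hyx i),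
    funext fun i => congrArg Prod.snd (hyx i), fun i => contDiffOn_pi.1 (hsmooth i).fst,
    contDiffOn_pi.2 fun i => (hsmooth i).snd, fun k q hq => ?_, fun k q hq => ?_⟩
  · ext i j
    change pdr k (fun q => (y i q).1 j) q = _
    rw [pdr_apply (hy i q hq).fst.differentiableAt, pd,
      (hy i q hq).fst.fderiv, comp_apply, coordConnection_apply_single]
    rfl
  · ext i
    rw [← pdr_apply (differentiableAt_pi.2 fun i => (hy i q hq).snd.differentiableAt), pdr,
      (hy i q hq).snd.fderiv, comp_apply, coordConnection_apply_single]
    rfl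

end MovingFrame

section OrthogonalFrame

variable {m N : ℕ} {U : Set (Fin m → ℝ)} {x y : Fin m → ℝ}
  {F : (Fin m → ℝ) → Matrix (Fin N) (Fin N) ℝ}

theorem eq_of_pdr_eq_zero (hU : IsOpen U) (hconn : IsPreconnected U) {b : (Fin m → ℝ) → ℝ}
    (hb : DifferentiableOn ℝ b U) (hzero : ∀ k, ∀ q ∈ U, pdr k b q = 0) (hx : x ∈ U)
    (hy : y ∈ U) : b x = b y := by
  refine hU.is_const_of_fderiv_eq_zero hconn hb (fun q hq => ?_) hx hy
  refine ContinuousLinearMap.coe_injective <| (Pi.basisFun ℝ (Fin m)).ext fun k => ?_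
  rw [Pi.basisFun_apply]
  exact hzero k q hq

theorem pdr_dotProduct {u v : (Fin m → ℝ) → Fin N → ℝ} (hu : DifferentiableAt ℝ u x)
    (hv : DifferentiableAt ℝ v x) (k : Fin m) :
    pdr k (fun q => u q ⬝ᵥ v q) x = pd k u x ⬝ᵥ v x + u x ⬝ᵥ pd k v x := by
  have hprod : HasFDerivAt (fun q => ∑ i, u q i * v q i) _ x := HasFDerivAt.fun_sum fun i _ =>
    (differentiableAt_pi.1 hu i).hasFDerivAt.mul (differentiableAt_pi.1 hv i).hasFDerivAt
  simp only [dotProduct, ← pdr_apply hu, ← pdr_apply hv, ← Finset.sum_add_distrib]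
  rw [pdr, hprod.fderiv, _root_.sum_apply]
  refine Finset.sum_congr rfl fun i _ => ?_
  rw [add_apply, smul_apply, smul_apply, smul_eq_mul, smul_eq_mul, add_comm, mul_comm (v x i)]
  rfl

theorem pdM_apply_eq_pd (hF : ∀ i j, DifferentiableAt ℝ (fun q => F q i j) x) (k : Fin m)
    (i : Fin N) : pdM k F x i = pd k (fun q => F q i) x := by
  ext j
  exact pdr_apply (differentiableAt_pi.2 (hF i)) k j

theorem pd_col (hF : ∀ i j, DifferentiableAt ℝ (fun q => F q i j) x) (k : Fin m)
    (j : Fin N) : pd k (fun q i => F q i j) x = pdM k F x *ᵥ Pi.single j 1 := by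
  ext i
  rw [← pdr_apply (differentiableAt_pi.2 fun i => hF i j), Matrix.mulVec_single_one]
  rfl

theorem mul_transpose_eq_of_pdM_eq (hU : IsOpen U) (hconn : IsPreconnected U)
    (hF : ∀ i j, ∀ q ∈ U, DifferentiableAt ℝ (fun q => F q i j) q)
    {A : Fin m → (Fin m → ℝ) → Matrix (Fin N) (Fin N) ℝ} (hA : ∀ k, ∀ q ∈ U, (A k q)ᵀ = -A k q)
    (hFA : ∀ k, ∀ q ∈ U, pdM k F q = F q * A k q) (hx : x ∈ U) (hy : y ∈ U) :
    F y * (F y)ᵀ = F x * (F x)ᵀ := by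
  have hrow : ∀ i, ∀ q ∈ U, DifferentiableAt ℝ (fun q => F q i) q := fun i q hq =>
    differentiableAt_pi.2 fun j => hF i j q hq
  have hskew : ∀ k, ∀ q ∈ U, pdM k F q * (F q)ᵀ + F q * (pdM k F q)ᵀ = 0 := fun k q hq => by
    rw [hFA k q hq, Matrix.transpose_mul, hA k q hq, Matrix.neg_mul, Matrix.mul_neg,
      Matrix.mul_assoc, add_neg_cancel]
  ext i j
  change F y i ⬝ᵥ F y j = F x i ⬝ᵥ F x j
  refine eq_of_pdr_eq_zero hU hconn (b := fun q => F q i ⬝ᵥ F q j) (fun q hq => ?_)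
    (fun k q hq => ?_) hy hx
  · exact (DifferentiableAt.fun_sum fun a _ =>
      (hF i a q hq).mul (hF j a q hq)).differentiableWithinAt
  · rw [pdr_dotProduct (hrow i q hq) (hrow j q hq), ← pdM_apply_eq_pd (hF · · q hq),
      ← pdM_apply_eq_pd (hF · · q hq)]
    exact congrFun₂ (hskew k q hq) i j

theorem det_eq_one_of_mul_transpose_eq_one (hconn : IsPreconnected U) (hF : ContinuousOn F U)
    (hFF : ∀ q ∈ U, F q * (F q)ᵀ = 1) (hx : x ∈ U) (hFx : (F x).det = 1) (hy : y ∈ U) :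
    (F y).det = 1 := by
  have hcont : ContinuousOn (fun q => (F q).det) U :=
    continuous_id.matrix_det.comp_continuousOn hF
  have hsq : Set.EqOn ((fun q => (F q).det) ^ 2) 1 U := fun q hq => by
    simpa [sq] using congrArg Matrix.det (hFF q hq)
  rcases hconn.eq_one_or_eq_neg_one_of_sq_eq hcont hsq with hone | hneg
  · exact hone hy
  · have : (1 : ℝ) = -1 := hFx.symm.trans (hneg hx)
    norm_num at this

theorem mulVec_dotProduct_mulVec {R n : Type*} [CommRing R] [Fintype n] [DecidableEq n]
    {A : Matrix n n R} (hA : Aᵀ * A = 1) (v w : n → R) : (A *ᵥ v) ⬝ᵥ (A *ᵥ w) = v ⬝ᵥ w := by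
  rw [Matrix.dotProduct_mulVec, ← Matrix.mulVec_transpose, Matrix.mulVec_mulVec, hA,
    Matrix.one_mulVec]

end OrthogonalFrame

section BlockMatrix

variable {m : ℕ} {P Q : Matrix (Fin m) (Fin m) ℝ} {g g' h h' : Fin m → ℝ}

@[simp]
theorem tildeA_castSucc_castSucc (i j : Fin m) : tildeA P h i.castSucc j.castSucc = P i j := by
  simp [tildeA]

@[simp]
theorem tildeA_castSucc_last (i : Fin m) : tildeA P h i.castSucc (Fin.last m) = -h i := by
  simp [tildeA]

@[simp]
theorem tildeA_last_castSucc (j : Fin m) : tildeA P h (Fin.last m) j.castSucc = h j := by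
  simp [tildeA]

@[simp]
theorem tildeA_last_last : tildeA P h (Fin.last m) (Fin.last m) = 0 := by
  simp [tildeA]

@[simp]
theorem hatg_castSucc (i : Fin m) : hatg g i.castSucc = g i := by
  simp [hatg]

@[simp]
theorem hatg_last : hatg g (Fin.last m) = 0 := by
  simp [hatg]

theorem ext_castSucc_last {R : Type*} {A B : Matrix (Fin (m + 1)) (Fin (m + 1)) R}
    (hcc : ∀ i j : Fin m, A i.castSucc j.castSucc = B i.castSucc j.castSucc)
    (hcl : ∀ i : Fin m, A i.castSucc (Fin.last m) = B i.castSucc (Fin.last m))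
    (hlc : ∀ j : Fin m, A (Fin.last m) j.castSucc = B (Fin.last m) j.castSucc)
    (hll : A (Fin.last m) (Fin.last m) = B (Fin.last m) (Fin.last m)) : A = B := by
  ext i j
  cases i using Fin.lastCases <;> cases j using Fin.lastCases
  exacts [hll, hlc _, hcl _, hcc _ _]

theorem transpose_tildeA (hP : Pᵀ = -P) : (tildeA P h)ᵀ = -tildeA P h := by
  refine ext_castSucc_last (fun i j => ?_) (fun i => ?_) (fun j => ?_) ?_
  · simpa using congrFun₂ hP i j
  all_goals simp

theorem tildeA_sub : tildeA (P - Q) (h - h') = tildeA P h - tildeA Q h' := by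
  refine ext_castSucc_last (fun i j => ?_) (fun i => ?_) (fun j => ?_) ?_ <;> simp [neg_add_eq_sub]

theorem hatg_sub : hatg (g - g') = hatg g - hatg g' := by
  ext i
  cases i using Fin.lastCases <;> simp

theorem hatg_dotProduct_hatg : hatg g ⬝ᵥ hatg h = g ⬝ᵥ h := by
  simp [dotProduct, Fin.sum_univ_castSucc]

theorem tildeA_mulVec_single_last : tildeA P h *ᵥ Pi.single (Fin.last m) 1 = hatg (-h) := by
  ext i
  cases i using Fin.lastCases <;> simp

theorem tildeA_mulVec_castSucc (i : Fin m) :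
    (tildeA P h *ᵥ hatg g) i.castSucc = (P *ᵥ g) i := by
  simp [Matrix.mulVec, dotProduct, Fin.sum_univ_castSucc]

theorem tildeA_mulVec_last : (tildeA P h *ᵥ hatg g) (Fin.last m) = h ⬝ᵥ g := by
  simp [Matrix.mulVec, dotProduct, Fin.sum_univ_castSucc]

theorem tildeA_mulVec_hatg_sub (hgh : h' ⬝ᵥ g = h ⬝ᵥ g') :
    tildeA Q h' *ᵥ hatg g - tildeA P h *ᵥ hatg g' = hatg (Q *ᵥ g - P *ᵥ g') := by
  ext i
  cases i using Fin.lastCases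
  · rw [Pi.sub_apply, tildeA_mulVec_last, tildeA_mulVec_last, hgh, sub_self, hatg_last]
  · rw [Pi.sub_apply, tildeA_mulVec_castSucc, tildeA_mulVec_castSucc, hatg_castSucc, Pi.sub_apply]

theorem tildeA_mul_tildeA_castSucc_castSucc (i j : Fin m) :
    (tildeA Q h' * tildeA P h) i.castSucc j.castSucc = (Q * P) i j - h' i * h j := by
  simp [Matrix.mul_apply, Fin.sum_univ_castSucc, sub_eq_add_neg]

theorem tildeA_mul_tildeA_castSucc_last (i : Fin m) :
    (tildeA Q h' * tildeA P h) i.castSucc (Fin.last m) = -(Q *ᵥ h) i := by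
  simp [Matrix.mul_apply, Fin.sum_univ_castSucc, Matrix.mulVec, dotProduct]

theorem tildeA_mul_tildeA_last_castSucc (j : Fin m) :
    (tildeA Q h' * tildeA P h) (Fin.last m) j.castSucc = (h' ᵥ* P) j := by
  simp [Matrix.mul_apply, Fin.sum_univ_castSucc, Matrix.vecMul, dotProduct]

theorem tildeA_mul_tildeA_last_last :
    (tildeA Q h' * tildeA P h) (Fin.last m) (Fin.last m) = -(h' ⬝ᵥ h) := by
  simp [Matrix.mul_apply, Fin.sum_univ_castSucc, dotProduct]

theorem tildeA_mul_sub_mul (hP : Pᵀ = -P) (hQ : Qᵀ = -Q) :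
    tildeA Q h' * tildeA P h - tildeA P h * tildeA Q h' =
      tildeA (Q * P - P * Q + (Matrix.vecMulVec h h' - Matrix.vecMulVec h' h))
        (Q *ᵥ h - P *ᵥ h') := by
  refine ext_castSucc_last (fun i j => ?_) (fun i => ?_) (fun j => ?_) ?_
  · simp only [Matrix.sub_apply, Matrix.add_apply, tildeA_mul_tildeA_castSucc_castSucc,
      tildeA_castSucc_castSucc, Matrix.vecMulVec_apply]
    ring
  · simp only [Matrix.sub_apply, Pi.sub_apply, tildeA_mul_tildeA_castSucc_last,
      tildeA_castSucc_last]
    ring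
  · simp only [Matrix.sub_apply, Pi.sub_apply, tildeA_mul_tildeA_last_castSucc,
      tildeA_last_castSucc, ← Matrix.mulVec_transpose, hP, hQ, Matrix.neg_mulVec, Pi.neg_apply]
    ring
  · rw [Matrix.sub_apply, tildeA_mul_tildeA_last_last, tildeA_mul_tildeA_last_last,
      dotProduct_comm, sub_self, tildeA_last_last]

end BlockMatrix

section BlockMatrixCalculus

variable {m d : ℕ} {P : (Fin m → ℝ) → Matrix (Fin d) (Fin d) ℝ} {g h : (Fin m → ℝ) → Fin d → ℝ}
  {U : Set (Fin m → ℝ)} {x : Fin m → ℝ} {n : ℕ∞}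

theorem contDiffOn_tildeA (hP : ∀ i j, ContDiffOn ℝ n (fun q => P q i j) U)
    (hh : ContDiffOn ℝ n h U) (i j : Fin (d + 1)) :
    ContDiffOn ℝ n (fun q => tildeA (P q) (h q) i j) U := by
  cases i using Fin.lastCases <;> cases j using Fin.lastCases
  · simpa only [tildeA_last_last] using contDiffOn_const
  · simpa only [tildeA_last_castSucc] using contDiffOn_pi.1 hh _
  · simpa only [tildeA_castSucc_last] using (contDiffOn_pi.1 hh _).neg
  · simpa only [tildeA_castSucc_castSucc] using hP _ _

theorem contDiffOn_hatg (hg : ContDiffOn ℝ n g U) : ContDiffOn ℝ n (fun q => hatg (g q)) U := by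
  refine contDiffOn_pi.2 fun i => ?_
  cases i using Fin.lastCases
  · simpa only [hatg_last] using contDiffOn_const
  · simpa only [hatg_castSucc] using contDiffOn_pi.1 hg _

theorem pdM_tildeA (hh : DifferentiableAt ℝ h x) (k : Fin m) :
    pdM k (fun q => tildeA (P q) (h q)) x = tildeA (pdM k P x) (pd k h x) := by
  refine ext_castSucc_last (fun i j => ?_) (fun i => ?_) (fun j => ?_) ?_ <;>
    simp only [pdM, Matrix.of_apply, tildeA_castSucc_castSucc, tildeA_castSucc_last,
      tildeA_last_castSucc, tildeA_last_last, ← pdr_apply hh]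
  all_goals simp [pdr]

theorem pd_hatg (hg : DifferentiableAt ℝ g x) (k : Fin m) :
    pd k (fun q => hatg (g q)) x = hatg (pd k g x) := by
  have hhat : DifferentiableAt ℝ (fun q => hatg (g q)) x := differentiableAt_pi.2 fun i => by
    cases i using Fin.lastCases
    · simpa only [hatg_last] using differentiableAt_const _
    · simpa only [hatg_castSucc] using differentiableAt_pi.1 hg _
  ext i
  rw [← pdr_apply hhat]
  cases i using Fin.lastCases
  · simp [pdr]
  · simp only [hatg_castSucc, pdr_apply hg]

end BlockMatrixCalculus

section FrontalBundle

variable {m : ℕ} {U : Set (Fin m → ℝ)} {P : Fin m → (Fin m → ℝ) → Matrix (Fin m) (Fin m) ℝ}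
  {g h : Fin m → (Fin m → ℝ) → Fin m → ℝ} {x : Fin m → ℝ} {n : ℕ∞}

/-- A frontal bundle over `U` for the ambient curvature `c = 0`, written in an adapted orthonormal
frame: `P k` are the matrices of a metric connection and `g k`, `h k` the components of the two
bundle homomorphisms `φ`, `ψ`. -/
structure IsFrontalBundle (U : Set (Fin m → ℝ))
    (P : Fin m → (Fin m → ℝ) → Matrix (Fin m) (Fin m) ℝ)
    (g h : Fin m → (Fin m → ℝ) → Fin m → ℝ) : Prop where
  skew : ∀ k, ∀ q ∈ U, (P k q)ᵀ = -(P k q)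
  codazzi_fst : ∀ k l, ∀ q ∈ U,
    pd k (g l) q - pd l (g k) q = P l q *ᵥ g k q - P k q *ᵥ g l q
  codazzi_snd : ∀ k l, ∀ q ∈ U,
    pd k (h l) q - pd l (h k) q = P l q *ᵥ h k q - P k q *ᵥ h l q
  compat : ∀ k l, ∀ q ∈ U, g k q ⬝ᵥ h l q = g l q ⬝ᵥ h k q
  gauss : ∀ k l, ∀ q ∈ U, pdM k (P l) q - pdM l (P k) q =
    P l q * P k q - P k q * P l q +
      (Matrix.vecMulVec (h k q) (h l q) - Matrix.vecMulVec (h l q) (h k q))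

theorem IsFrontalBundle.pdM_tildeA_sub (hB : IsFrontalBundle U P g h)
    (hh : ∀ k, DifferentiableAt ℝ (h k) x) (hx : x ∈ U) (k l : Fin m) :
    pdM k (fun q => tildeA (P l q) (h l q)) x - pdM l (fun q => tildeA (P k q) (h k q)) x =
      tildeA (P l x) (h l x) * tildeA (P k x) (h k x) -
        tildeA (P k x) (h k x) * tildeA (P l x) (h l x) := by
  rw [pdM_tildeA (hh l), pdM_tildeA (hh k), ← tildeA_sub, hB.gauss k l x hx,
    hB.codazzi_snd k l x hx, tildeA_mul_sub_mul (hB.skew k x hx) (hB.skew l x hx)]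

theorem IsFrontalBundle.pd_hatg_sub (hB : IsFrontalBundle U P g h)
    (hg : ∀ k, DifferentiableAt ℝ (g k) x) (hx : x ∈ U) (k l : Fin m) :
    pd k (fun q => hatg (g l q)) x - pd l (fun q => hatg (g k q)) x =
      tildeA (P l x) (h l x) *ᵥ hatg (g k x) - tildeA (P k x) (h k x) *ᵥ hatg (g l x) := by
  have hcompat : h l x ⬝ᵥ g k x = h k x ⬝ᵥ g l x := by
    rw [dotProduct_comm, hB.compat k l x hx, dotProduct_comm]
  rw [pd_hatg (hg l), pd_hatg (hg k), ← hatg_sub, hB.codazzi_fst k l x hx,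
    tildeA_mulVec_hatg_sub hcompat]

theorem IsFrontalBundle.exists_orthonormalFrame (hB : IsFrontalBundle U P g h) (hn : 1 ≤ n)
    (hU : IsOpen U) (hsc : SimplyConnectedSpace U)
    (hP : ∀ k i j, ContDiffOn ℝ n (fun q => P k q i j) U)
    (hg : ∀ k, ContDiffOn ℝ n (g k) U) (hh : ∀ k, ContDiffOn ℝ n (h k) U) :
    ∃ (F : (Fin m → ℝ) → Matrix (Fin (m + 1)) (Fin (m + 1)) ℝ)
      (f : (Fin m → ℝ) → (Fin (m + 1) → ℝ)),
      (∀ i j, ContDiffOn ℝ n (fun q => F q i j) U) ∧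
      ContDiffOn ℝ n f U ∧
      (∀ q ∈ U, (F q)ᵀ * F q = 1 ∧ (F q).det = 1) ∧
      (∀ k, ∀ q ∈ U, pdM k F q = F q * tildeA (P k q) (h k q)) ∧
      (∀ k, ∀ q ∈ U, pd k f q = F q *ᵥ hatg (g k q)) := by
  obtain ⟨x, hx⟩ : U.Nonempty := Set.nonempty_coe_sort.1 inferInstance
  have hconn : IsPreconnected U := isPreconnected_iff_preconnectedSpace.2 inferInstance
  obtain ⟨F, f, hFx, -, hF, hf, hdF, hdf⟩ := exists_movingFrame hn hU hsc
    (fun k => contDiffOn_tildeA (hP k) (hh k)) (fun k => contDiffOn_hatg (hg k))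
    (fun k l q hq =>
      hB.pdM_tildeA_sub (fun k => differentiableAt_of_contDiffOn hn hU (hh k) hq) hq k l)
    (fun k l q hq =>
      hB.pd_hatg_sub (fun k => differentiableAt_of_contDiffOn hn hU (hg k) hq) hq k l)
    hx 1 0
  have hFF : ∀ q ∈ U, F q * (F q)ᵀ = 1 := fun q hq => by
    rw [mul_transpose_eq_of_pdM_eq hU hconn
      (fun i j q hq => differentiableAt_of_contDiffOn hn hU (hF i j) hq)
      (fun k q hq => transpose_tildeA (hB.skew k q hq)) hdF hx hq, hFx, Matrix.transpose_one,
      Matrix.one_mul]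
  have hcont : ContinuousOn F U :=
    continuousOn_pi.2 fun i => continuousOn_pi.2 fun j => (hF i j).continuousOn
  exact ⟨F, f, hF, hf, fun q hq => ⟨mul_eq_one_comm.1 (hFF q hq),
    det_eq_one_of_mul_transpose_eq_one hconn hcont hFF hx (hFx ▸ Matrix.det_one) hq⟩, hdF, hdf⟩

theorem pd_lastCol {F : (Fin m → ℝ) → Matrix (Fin (m + 1)) (Fin (m + 1)) ℝ}
    {A : Matrix (Fin m) (Fin m) ℝ} {b : Fin m → ℝ} {k : Fin m}
    (hF : ∀ i j, DifferentiableAt ℝ (fun q => F q i j) x)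
    (hdF : pdM k F x = F x * tildeA A b) :
    pd k (fun q i => F q i (Fin.last m)) x = F x *ᵥ hatg (-b) := by
  rw [pd_col hF, hdF, ← Matrix.mulVec_mulVec, tildeA_mulVec_single_last]

theorem realization_frontal_bundle_euclidean_general (hn : 1 ≤ n) (hU : IsOpen U)
    (hsc : SimplyConnectedSpace U) (hB : IsFrontalBundle U P g h)
    (hP : ∀ k i j, ContDiffOn ℝ n (fun q => P k q i j) U)
    (hg : ∀ k, ContDiffOn ℝ n (g k) U) (hh : ∀ k, ContDiffOn ℝ n (h k) U) :
    ∃ (F : (Fin m → ℝ) → Matrix (Fin (m + 1)) (Fin (m + 1)) ℝ)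
      (f : (Fin m → ℝ) → (Fin (m + 1) → ℝ)),
      (∀ i j, ContDiffOn ℝ n (fun q => F q i j) U) ∧
      ContDiffOn ℝ n f U ∧
      (∀ q ∈ U, (F q)ᵀ * F q = 1 ∧ (F q).det = 1) ∧
      (∀ k, ∀ q ∈ U, pdM k F q = F q * tildeA (P k q) (h k q)) ∧
      (∀ k, ∀ q ∈ U, pd k f q = F q *ᵥ hatg (g k q)) ∧
      (∀ ν : (Fin m → ℝ) → (Fin (m + 1) → ℝ),
        (∀ q, ν q = fun i => F q i (Fin.last m)) →
        (∀ q ∈ U, ν q ⬝ᵥ ν q = 1) ∧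
        (∀ k, ∀ q ∈ U, pd k f q ⬝ᵥ ν q = 0) ∧
        (∀ k l, ∀ q ∈ U, pd k f q ⬝ᵥ pd l f q = g k q ⬝ᵥ g l q) ∧
        (∀ k l, ∀ q ∈ U, pd k f q ⬝ᵥ pd l ν q = -(g k q ⬝ᵥ h l q)) ∧
        (∀ k l, ∀ q ∈ U, pd k ν q ⬝ᵥ pd l ν q = h k q ⬝ᵥ h l q)) := by
  obtain ⟨F, f, hF, hf, hSO, hdF, hdf⟩ := hB.exists_orthonormalFrame hn hU hsc hP hg hh
  refine ⟨F, f, hF, hf, hSO, hdF, hdf, fun ν hν => ?_⟩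
  have hdot : ∀ q ∈ U, ∀ v w, (F q *ᵥ v) ⬝ᵥ (F q *ᵥ w) = v ⬝ᵥ w := fun q hq =>
    mulVec_dotProduct_mulVec (hSO q hq).1
  have hνF : ∀ q, ν q = F q *ᵥ Pi.single (Fin.last m) 1 := fun q => by
    rw [hν, Matrix.mulVec_single_one]
    rfl
  have hdν : ∀ k, ∀ q ∈ U, pd k ν q = F q *ᵥ hatg (-h k q) := fun k q hq => by
    rw [funext hν]
    exact pd_lastCol (fun i j => differentiableAt_of_contDiffOn hn hU (hF i j) hq) (hdF k q hq)
  refine ⟨fun q hq => ?_, fun k q hq => ?_, fun k l q hq => ?_, fun k l q hq => ?_,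
    fun k l q hq => ?_⟩
  · rw [hνF, hdot q hq, dotProduct_single_one, Pi.single_eq_same]
  · rw [hdf k q hq, hνF, hdot q hq, dotProduct_single_one, hatg_last]
  · rw [hdf k q hq, hdf l q hq, hdot q hq, hatg_dotProduct_hatg]
  · rw [hdf k q hq, hdν l q hq, hdot q hq, hatg_dotProduct_hatg, dotProduct_neg]
  · rw [hdν k q hq, hdν l q hq, hdot q hq, hatg_dotProduct_hatg, neg_dotProduct_neg]

end FrontalBundle

/-- Realization of frontal bundles in the Euclidean case `c = 0`:
a frontal bundle over a simply connected domain, given in an adapted orthonormal frame by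
connection matrices `P_k` and homomorphism components `g_k, h_k` satisfying the coherence,
compatibility and Gauss equations, is realized by a frontal `(f, ν)` in `ℝ^{m+1}`. -/
theorem realization_frontal_bundle_euclidean {m : ℕ}
    (U : Set (Fin m → ℝ)) (hU : IsOpen U)
    (hconn : IsConnected U) (hsc : SimplyConnectedSpace U)
    (P : Fin m → (Fin m → ℝ) → Matrix (Fin m) (Fin m) ℝ)
    (g h : Fin m → (Fin m → ℝ) → (Fin m → ℝ))
    (hP : ∀ k i j, ContDiffOn ℝ (⊤ : ℕ∞) (fun q => P k q i j) U)
    (hg : ∀ k, ContDiffOn ℝ (⊤ : ℕ∞) (g k) U) (hh : ∀ k, ContDiffOn ℝ (⊤ : ℕ∞) (h k) U)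
    (hskew : ∀ k, ∀ q ∈ U, (P k q)ᵀ = -(P k q))
    (hcodazzig : ∀ k l, ∀ q ∈ U,
      pd k (g l) q - pd l (g k) q = P l q *ᵥ g k q - P k q *ᵥ g l q)
    (hcodazzih : ∀ k l, ∀ q ∈ U,
      pd k (h l) q - pd l (h k) q = P l q *ᵥ h k q - P k q *ᵥ h l q)
    (hcompat : ∀ k l, ∀ q ∈ U, g k q ⬝ᵥ h l q = g l q ⬝ᵥ h k q)
    (hgauss : ∀ k l, ∀ q ∈ U,
      pdM k (P l) q - pdM l (P k) q
        = P l q * P k q - P k q * P l q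
          + (Matrix.vecMulVec (h k q) (h l q) - Matrix.vecMulVec (h l q) (h k q))) :
    ∃ (F : (Fin m → ℝ) → Matrix (Fin (m + 1)) (Fin (m + 1)) ℝ)
      (f : (Fin m → ℝ) → (Fin (m + 1) → ℝ)),
      (∀ i j, ContDiffOn ℝ (⊤ : ℕ∞) (fun q => F q i j) U) ∧
      ContDiffOn ℝ (⊤ : ℕ∞) f U ∧
      (∀ q ∈ U, (F q)ᵀ * F q = 1 ∧ (F q).det = 1) ∧
      (∀ k, ∀ q ∈ U, pdM k F q = F q * tildeA (P k q) (h k q)) ∧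
      (∀ k, ∀ q ∈ U, pd k f q = F q *ᵥ hatg (g k q)) ∧
      (∀ ν : (Fin m → ℝ) → (Fin (m + 1) → ℝ),
        (∀ q, ν q = fun i => F q i (Fin.last m)) →
        (∀ q ∈ U, ν q ⬝ᵥ ν q = 1) ∧
        (∀ k, ∀ q ∈ U, pd k f q ⬝ᵥ ν q = 0) ∧
        (∀ k l, ∀ q ∈ U, pd k f q ⬝ᵥ pd l f q = g k q ⬝ᵥ g l q) ∧
        (∀ k l, ∀ q ∈ U, pd k f q ⬝ᵥ pd l ν q = -(g k q ⬝ᵥ h l q)) ∧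
        (∀ k l, ∀ q ∈ U, pd k ν q ⬝ᵥ pd l ν q = h k q ⬝ᵥ h l q)) :=
  realization_frontal_bundle_euclidean_general le_top hU hsc
    ⟨hskew, hcodazzig, hcodazzih, hcompat, hgauss⟩ hP hg hh
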